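/- If f is MT-convex on I, a, b ∈ I with a < b, and f is integrable on [a,b], then (2/(b-a)) ∫_a^b τ(x) f(x) dx ≤ (f(a)+f(b))/2, where τ(x) = √((b-x)(x-a))/(b-a). -/

import Mathlib

/-!
At the point dividing `[a, b]` in the ratio given by `t`, the weight `τ` takes the value
`√t * √(1 - t)`, which clears both denominators of the MT-convexity inequality: `τ * f` lies below
half the chord of `f` over `[a, b]`. Integrating the chord gives the bound.
-/

open Set Real

/-- The weight `τ(x) = √((b - x)(x - a)) / (b - a)` on `[a, b]` of the Hadamard inequality for
MT-convex functions. -/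
noncomputable def mtWeight (a b x : ℝ) : ℝ := √((b - x) * (x - a)) / (b - a)

/-- The MT-convexity inequality between two given points: a nonnegative function is MT-convex
on `I` when this holds for every pair of points of `I`. -/
def MTConvexBetween (f : ℝ → ℝ) (a b : ℝ) : Prop :=
  ∀ t ∈ Ioo (0 : ℝ) 1, f (t * a + (1 - t) * b) ≤
    √t / (2 * √(1 - t)) * f a + √(1 - t) / (2 * √t) * f b

theorem continuous_mtWeight (a b : ℝ) : Continuous (mtWeight a b) := by
  unfold mtWeight
  fun_prop

theorem mtWeight_convex_combination {a b t : ℝ} (hab : a < b) (ht : 0 ≤ t) :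
    mtWeight a b (t * a + (1 - t) * b) = √t * √(1 - t) := by
  have hba : 0 < b - a := sub_pos.mpr hab
  have hprod : (b - (t * a + (1 - t) * b)) * (t * a + (1 - t) * b - a) =
      t * (1 - t) * (b - a) ^ 2 := by ring
  rw [mtWeight, hprod, sqrt_mul' _ (sq_nonneg _), sqrt_sq hba.le,
    mul_div_cancel_right₀ _ hba.ne', sqrt_mul ht]

theorem sqrt_mul_sqrt_mul_mt_combination {p q : ℝ} (hp : 0 < p) (hq : 0 < q) (y z : ℝ) :
    √p * √q * (√p / (2 * √q) * y + √q / (2 * √p) * z) = (p * y + q * z) / 2 := by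
  have hp' : √p ≠ 0 := (sqrt_pos.mpr hp).ne'
  have hq' : √q ≠ 0 := (sqrt_pos.mpr hq).ne'
  calc √p * √q * (√p / (2 * √q) * y + √q / (2 * √p) * z)
      = (√p ^ 2 * y + √q ^ 2 * z) / 2 := by field_simp
    _ = (p * y + q * z) / 2 := by rw [sq_sqrt hp.le, sq_sqrt hq.le]

namespace MTConvexBetween

variable {f : ℝ → ℝ} {a b : ℝ}

theorem mtWeight_mul_le (hf : MTConvexBetween f a b) (hab : a < b) {t : ℝ}
    (ht : t ∈ Ioo (0 : ℝ) 1) :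
    mtWeight a b (t * a + (1 - t) * b) * f (t * a + (1 - t) * b) ≤
      (t * f a + (1 - t) * f b) / 2 := by
  rw [mtWeight_convex_combination hab ht.1.le,
    ← sqrt_mul_sqrt_mul_mt_combination ht.1 (sub_pos.mpr ht.2)]
  exact mul_le_mul_of_nonneg_left (hf t ht) (by positivity)

theorem mtWeight_mul_le_chord (hf : MTConvexBetween f a b) {x : ℝ} (hx : x ∈ Ioo a b) :
    mtWeight a b x * f x ≤ ((b - x) * f a + (x - a) * f b) / (2 * (b - a)) := by
  have hab : a < b := hx.1.trans hx.2
  have hba : 0 < b - a := sub_pos.mpr hab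
  have ht : (b - x) / (b - a) ∈ Ioo (0 : ℝ) 1 :=
    ⟨div_pos (sub_pos.mpr hx.2) hba, (div_lt_one hba).mpr (sub_lt_sub_left hx.1 b)⟩
  have hone_sub : 1 - (b - x) / (b - a) = (x - a) / (b - a) := by
    field_simp
    ring
  have hcomb : (b - x) / (b - a) * a + (x - a) / (b - a) * b = x := by
    field_simp
    ring
  have hle := hf.mtWeight_mul_le hab ht
  rw [hone_sub, hcomb] at hle
  refine hle.trans_eq ?_
  field_simp

end MTConvexBetween

theorem integral_chord (a b y z : ℝ) :
    ∫ x in a..b, ((b - x) * y + (x - a) * z) = (b - a) ^ 2 / 2 * (y + z) := by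
  rw [intervalIntegral.integral_add (Continuous.intervalIntegrable (by fun_prop) a b)
    (Continuous.intervalIntegrable (by fun_prop) a b)]
  rw [intervalIntegral.integral_mul_const, intervalIntegral.integral_mul_const,
    intervalIntegral.integral_comp_sub_left fun x => x,
    intervalIntegral.integral_comp_sub_right fun x => x, integral_id, integral_id]
  ring

theorem mt_convex_hadamard_right_general {f : ℝ → ℝ} {a b : ℝ} (hf : MTConvexBetween f a b)
    (hab : a < b)
    (hint : IntervalIntegrable (fun x => mtWeight a b x * f x) MeasureTheory.volume a b) :
    2 / (b - a) * ∫ x in a..b, mtWeight a b x * f x ≤ (f a + f b) / 2 := by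
  have hba : 0 < b - a := sub_pos.mpr hab
  calc 2 / (b - a) * ∫ x in a..b, mtWeight a b x * f x
      ≤ 2 / (b - a) * ∫ x in a..b, ((b - x) * f a + (x - a) * f b) / (2 * (b - a)) := by
        gcongr
        exact intervalIntegral.integral_mono_on_of_le_Ioo hab.le hint
          (Continuous.intervalIntegrable (by fun_prop) a b)
          fun x hx => hf.mtWeight_mul_le_chord hx
    _ = (f a + f b) / 2 := by
        rw [intervalIntegral.integral_div, integral_chord]
        field_simp

theorem mt_convex_hadamard_right (I : Set ℝ) (hI : Convex ℝ I) (f : ℝ → ℝ)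
    (hf0 : ∀ x ∈ I, 0 ≤ f x)
    (hf : ∀ x ∈ I, ∀ y ∈ I, ∀ t ∈ Set.Ioo (0:ℝ) 1,
      f (t * x + (1 - t) * y) ≤
        Real.sqrt t / (2 * Real.sqrt (1 - t)) * f x +
        Real.sqrt (1 - t) / (2 * Real.sqrt t) * f y)
    (a b : ℝ) (ha : a ∈ I) (hb : b ∈ I) (hab : a < b)
    (hint : IntervalIntegrable f MeasureTheory.volume a b) :
    (2 / (b - a)) * ∫ x in a..b, (Real.sqrt ((b - x) * (x - a)) / (b - a)) * f x ≤
      (f a + f b) / 2 :=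
  mt_convex_hadamard_right_general (hf a ha b hb) hab
    (hint.continuousOn_mul (continuous_mtWeight a b).continuousOn)
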